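/- Consider, for each integer k, the unordered pair of residues modulo 65024 consisting of (2k(k+1) + 127(2k+1)) mod 65024 and (2k(k+1) − 127(2k+1)) mod 65024. Then the set of all such unordered pairs, as k ranges over the integers, has exactly 4096 elements. -/

import Mathlib

/-! Write `f k = 2k(k+1) + p(2k+1)` with `n = 128` and `p = 127`. The two residues of `k` are `f k`
and `f (-1 - k)`, so swapping them amounts to the reflection `k ↦ -1 - k`. Put `u = l - k` and
`v = l + k + 1`, which have opposite parities. The ordered pairs of `k` and `l` differ by
`2u(v + p)` and `2u(v - p)`, and both vanish modulo `4np` exactly when `n ∣ u` and `p ∣ uv`. Hence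
the unordered pairs agree exactly when `k` and `l` agree up to reflection both modulo `n` and
modulo `p`. By the Chinese remainder theorem these two classes are independent, and the reflection
has `⌈d / 2⌉` orbits on `ℤ / d`. -/

theorem ncard_range_eq_of_eq_iff {α β γ : Type*} {f : α → β} {g : α → γ}
    (h : ∀ x y, f x = f y ↔ g x = g y) : (Set.range f).ncard = (Set.range g).ncard := by
  have hker : Setoid.ker f = Setoid.ker g := Setoid.ext h
  calc (Set.range f).ncard
    _ = Nat.card (Quotient (Setoid.ker f)) :=
        (Nat.card_congr (Setoid.quotientKerEquivRange f)).symm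
    _ = Nat.card (Quotient (Setoid.ker g)) := by rw [hker]
    _ = (Set.range g).ncard := Nat.card_congr (Setoid.quotientKerEquivRange g)

section ReflectionClass

variable {R : Type*} [AddCommGroupWithOne R]

/-- The orbit of `x` under the reflection `x ↦ -1 - x`, encoded as an unordered pair in which the
fixed points of the reflection are doubled. -/
def reflectionClass (x : R) : Sym2 R :=
  s(x, -1 - x)

theorem reflectionClass_eq_iff {x y : R} :
    reflectionClass x = reflectionClass y ↔ x = y ∨ x = -1 - y := by
  have hrefl : -1 - x = -1 - y ↔ x = y := sub_right_inj
  have hswap : -1 - x = y ↔ x = -1 - y := by rw [sub_eq_iff_eq_add, eq_sub_iff_add_eq', eq_comm]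
  simp only [reflectionClass, Sym2.eq_iff, hrefl, hswap, and_self]

theorem reflectionClass_reflect (x : R) : reflectionClass (-1 - x) = reflectionClass x :=
  reflectionClass_eq_iff.2 (Or.inr rfl)

variable {d : ℕ}

theorem range_reflectionClass_zmod [NeZero d] :
    Set.range (reflectionClass : ZMod d → Sym2 (ZMod d)) =
      (fun a : ℕ => reflectionClass (a : ZMod d)) '' Finset.range ((d + 1) / 2) := by
  refine Set.Subset.antisymm ?_ (by rintro _ ⟨a, -, rfl⟩; exact ⟨a, rfl⟩)
  rintro _ ⟨x, rfl⟩
  have hval : x.val < d := x.val_lt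
  rcases lt_or_ge x.val ((d + 1) / 2) with hlt | hge
  · exact ⟨x.val, by simpa using hlt, by simp only [ZMod.natCast_zmod_val]⟩
  · obtain ⟨a, ha⟩ : ∃ a, a + x.val + 1 = d := ⟨d - 1 - x.val, by omega⟩
    have hcast : (a : ZMod d) + x + 1 = 0 := by
      simpa using congrArg (Nat.cast : ℕ → ZMod d) ha
    have hax : (a : ZMod d) = -1 - x := by linear_combination hcast
    exact ⟨a, by simp only [Finset.coe_range, Set.mem_Iio]; omega,
      reflectionClass_eq_iff.2 (Or.inr hax)⟩

theorem injOn_reflectionClass_natCast :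
    Set.InjOn (fun a : ℕ => reflectionClass (a : ZMod d)) (Finset.range ((d + 1) / 2)) := by
  intro a ha b hb hab
  simp only [Finset.coe_range, Set.mem_Iio] at ha hb
  rcases reflectionClass_eq_iff.1 hab with heq | hrefl
  · have hmod : a ≡ b [MOD d] := (ZMod.natCast_eq_natCast_iff a b d).1 heq
    exact hmod.eq_of_lt_of_lt (by omega) (by omega)
  · have hdvd : d ∣ a + b + 1 := by
      rw [← ZMod.natCast_eq_zero_iff]
      push_cast
      linear_combination hrefl
    have hle : d ≤ a + b + 1 := Nat.le_of_dvd (Nat.succ_pos _) hdvd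
    omega

theorem ncard_range_reflectionClass_zmod [NeZero d] :
    (Set.range (reflectionClass : ZMod d → Sym2 (ZMod d))).ncard = (d + 1) / 2 := by
  rw [range_reflectionClass_zmod, injOn_reflectionClass_natCast.ncard_image,
    Set.ncard_coe_finset, Finset.card_range]

theorem reflectionClass_intCast_eq_iff_dvd {p : ℕ} (hp : p.Prime) (k l : ℤ) :
    reflectionClass (k : ZMod p) = reflectionClass (l : ZMod p) ↔
      (p : ℤ) ∣ (l - k) * (l + k + 1) := by
  have hreflect : (-1 - l : ZMod p) = ((-1 - l : ℤ) : ZMod p) := by push_cast; rfl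
  have hneg : (p : ℤ) ∣ -1 - l - k ↔ (p : ℤ) ∣ l + k + 1 := by
    rw [← dvd_neg]
    ring_nf
  rw [reflectionClass_eq_iff, (Nat.prime_iff_prime_int.1 hp).dvd_mul, hreflect,
    ZMod.intCast_eq_intCast_iff_dvd_sub, ZMod.intCast_eq_intCast_iff_dvd_sub, hneg]

end ReflectionClass

section ChineseRemainder

variable {m n : ℕ}

theorem intCast_prod_zmod_surjective (h : m.Coprime n) :
    Function.Surjective fun k : ℤ => ((k : ZMod m), (k : ZMod n)) := by
  have hcast : (fun k : ℤ => ((k : ZMod m), (k : ZMod n))) =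
      ZMod.chineseRemainder h ∘ ((↑) : ℤ → ZMod (m * n)) := by
    funext k
    exact (map_intCast (ZMod.chineseRemainder h) k).symm
  rw [hcast]
  exact (ZMod.chineseRemainder h).surjective.comp ZMod.intCast_surjective

theorem ncard_range_reflectionClass_prod [NeZero m] [NeZero n] (h : m.Coprime n) :
    (Set.range fun k : ℤ =>
      (reflectionClass (k : ZMod m), reflectionClass (k : ZMod n))).ncard =
        (m + 1) / 2 * ((n + 1) / 2) := by
  have hcomp : (fun k : ℤ => (reflectionClass (k : ZMod m), reflectionClass (k : ZMod n))) =
      Prod.map reflectionClass reflectionClass ∘ fun k : ℤ => ((k : ZMod m), (k : ZMod n)) := rfl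
  rw [hcomp, (intCast_prod_zmod_surjective h).range_comp, Set.range_prodMap, Set.ncard_prod,
    ncard_range_reflectionClass_zmod, ncard_range_reflectionClass_zmod]

end ChineseRemainder

theorem two_mul_mul_dvd_mul_add_and_mul_sub_iff {n p u v : ℤ} (hn : Even n) (hnp : IsCoprime n p)
    (huv : Odd (u + v)) :
    2 * n * p ∣ u * (v + p) ∧ 2 * n * p ∣ u * (v - p) ↔ n ∣ u ∧ p ∣ u * v := by
  have h2p : IsCoprime 2 p := hnp.of_isCoprime_of_dvd_left hn.two_dvd
  have hp_add : p ∣ u * (v + p) ↔ p ∣ u * v := by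
    rw [mul_add, dvd_add_left (dvd_mul_left p u)]
  have hp_sub : p ∣ u * (v - p) ↔ p ∣ u * v := by
    rw [mul_sub, dvd_sub_left (dvd_mul_left p u)]
  constructor
  · rintro ⟨hadd, hsub⟩
    have hdiff : u * (v + p) - u * (v - p) = 2 * (u * p) := by ring
    have hdvd : 2 * n ∣ 2 * (u * p) :=
      hdiff ▸ (dvd_of_mul_right_dvd hadd).sub (dvd_of_mul_right_dvd hsub)
    exact ⟨hnp.dvd_of_dvd_mul_right (Int.dvd_of_mul_dvd_mul_left two_ne_zero hdvd),
      hp_add.1 (dvd_of_mul_left_dvd hadd)⟩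
  · rintro ⟨hnu, hpuv⟩
    have hu : Even u := even_iff_two_dvd.2 (hn.two_dvd.trans hnu)
    have hv : Odd v := (Int.odd_add'.1 huv).2 hu
    have hp : Odd p := Int.isCoprime_two_left.1 h2p
    have hcop : IsCoprime (2 * n) p := h2p.mul_left hnp
    have h2n {w : ℤ} (hw : Even w) : 2 * n ∣ u * w := by
      rw [mul_comm u]
      exact mul_dvd_mul hw.two_dvd hnu
    exact ⟨hcop.mul_dvd (h2n (hv.add_odd hp)) (hp_add.2 hpuv),
      hcop.mul_dvd (h2n (hv.sub_odd hp)) (hp_sub.2 hpuv)⟩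

/-- The numerator of the Eells–Kuiper invariant of `Q^15_k` for one of its two Spin structures,
with the parameters `n = 128` and `p = 127` of the common denominator `65024 = 4np` left free. -/
def eellsKuiperNumerator (n p : ℕ) (k : ℤ) : ZMod (4 * n * p) :=
  ((2 * k * (k + 1) + p * (2 * k + 1) : ℤ) : ZMod (4 * n * p))

/-- The pair of Eells–Kuiper numerators of `Q^15_k`, one for each Spin structure; the choice of
which Spin structure comes first is immaterial, whence the unordered pair. -/
def eellsKuiperPair (n p : ℕ) (k : ℤ) : Sym2 (ZMod (4 * n * p)) :=
  s(((2 * k * (k + 1) + p * (2 * k + 1) : ℤ) : ZMod (4 * n * p)),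
    ((2 * k * (k + 1) - p * (2 * k + 1) : ℤ) : ZMod (4 * n * p)))

section EellsKuiper

variable {n p : ℕ}

theorem eellsKuiperNumerator_reflect (k : ℤ) :
    eellsKuiperNumerator n p (-1 - k) =
      ((2 * k * (k + 1) - p * (2 * k + 1) : ℤ) : ZMod (4 * n * p)) :=
  congrArg Int.cast (by ring)

theorem eellsKuiperNumerator_eq_iff_dvd (k l : ℤ) :
    eellsKuiperNumerator n p k = eellsKuiperNumerator n p l ↔
      (2 * n * p : ℤ) ∣ (l - k) * (l + k + 1 + p) := by
  have hdiff : 2 * l * (l + 1) + p * (2 * l + 1) - (2 * k * (k + 1) + p * (2 * k + 1)) =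
      2 * ((l - k) * (l + k + 1 + p)) := by ring
  have hmod : ((4 * n * p : ℕ) : ℤ) = 2 * (2 * n * p) := by push_cast; ring
  rw [eellsKuiperNumerator, eellsKuiperNumerator, ZMod.intCast_eq_intCast_iff_dvd_sub, hdiff, hmod,
    mul_dvd_mul_iff_left two_ne_zero]

theorem eellsKuiperNumerator_reflect_eq_iff_dvd (k l : ℤ) :
    eellsKuiperNumerator n p (-1 - k) = eellsKuiperNumerator n p (-1 - l) ↔
      (2 * n * p : ℤ) ∣ (l - k) * (l + k + 1 - p) := by
  rw [eellsKuiperNumerator_eq_iff_dvd]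
  ring_nf

theorem eellsKuiperNumerator_pair_eq_iff (hn : Even n) (hp : p.Prime) (hnp : n.Coprime p)
    (k l : ℤ) :
    (eellsKuiperNumerator n p k = eellsKuiperNumerator n p l ∧
      eellsKuiperNumerator n p (-1 - k) = eellsKuiperNumerator n p (-1 - l)) ↔
    (k : ZMod n) = l ∧ reflectionClass (k : ZMod p) = reflectionClass (l : ZMod p) := by
  have hodd : Odd (l - k + (l + k + 1)) := ⟨l, by ring⟩
  rw [eellsKuiperNumerator_eq_iff_dvd, eellsKuiperNumerator_reflect_eq_iff_dvd,
    two_mul_mul_dvd_mul_add_and_mul_sub_iff (mod_cast hn) hnp.isCoprime hodd,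
    ZMod.intCast_eq_intCast_iff_dvd_sub, reflectionClass_intCast_eq_iff_dvd hp]

theorem eellsKuiperPair_eq_sym2_reflect (k : ℤ) :
    eellsKuiperPair n p k =
      s(eellsKuiperNumerator n p k, eellsKuiperNumerator n p (-1 - k)) := by
  rw [eellsKuiperNumerator_reflect]
  rfl

theorem eellsKuiperPair_eq_iff (hn : Even n) (hp : p.Prime) (hnp : n.Coprime p) (k l : ℤ) :
    eellsKuiperPair n p k = eellsKuiperPair n p l ↔
      reflectionClass (k : ZMod n) = reflectionClass (l : ZMod n) ∧
        reflectionClass (k : ZMod p) = reflectionClass (l : ZMod p) := by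
  have hswap := eellsKuiperNumerator_pair_eq_iff hn hp hnp k (-1 - l)
  rw [sub_sub_cancel] at hswap
  rw [eellsKuiperPair_eq_sym2_reflect, eellsKuiperPair_eq_sym2_reflect, Sym2.eq_iff,
    eellsKuiperNumerator_pair_eq_iff hn hp hnp, hswap]
  push_cast
  rw [reflectionClass_reflect, ← or_and_right, ← reflectionClass_eq_iff]

end EellsKuiper

theorem shimada_proj_count_general {n p : ℕ} (hn : Even n) (hp : p.Prime) (hnp : n.Coprime p) :
    (Set.range (eellsKuiperPair n p)).ncard = n / 2 * ((p + 1) / 2) := by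
  have : NeZero p := ⟨hp.ne_zero⟩
  have : NeZero n := ⟨by rintro rfl; exact hp.ne_one (p.coprime_zero_left.1 hnp)⟩
  have hclasses (k l : ℤ) : eellsKuiperPair n p k = eellsKuiperPair n p l ↔
      (reflectionClass (k : ZMod n), reflectionClass (k : ZMod p)) =
        (reflectionClass (l : ZMod n), reflectionClass (l : ZMod p)) := by
    rw [eellsKuiperPair_eq_iff hn hp hnp, Prod.mk_inj]
  have hhalf : (n + 1) / 2 = n / 2 := by grind
  rw [ncard_range_eq_of_eq_iff hclasses, ncard_range_reflectionClass_prod hnp, hhalf]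

/-- The set of unordered pairs
`{(2k(k+1) + 127(2k+1)) mod 65024, (2k(k+1) − 127(2k+1)) mod 65024}`,
as `k` ranges over the integers, has exactly 4096 elements. -/
theorem shimada_proj_count :
    (Set.range fun k : ℤ =>
      (s(((2 * k * (k + 1) + 127 * (2 * k + 1) : ℤ) : ZMod 65024),
         ((2 * k * (k + 1) - 127 * (2 * k + 1) : ℤ) : ZMod 65024)) :
        Sym2 (ZMod 65024))).ncard = 4096 :=
  shimada_proj_count_general (n := 128) (p := 127) (by decide) (by norm_num) (by norm_num)
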